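/- Under the stated hypotheses, if the convex hull K(σ) of σ does not intersect Σ and ‖V‖ < √2·d (equivalently, δ_V < d), then the spectrum of B in the open d-neighborhood O_d(σ) of σ is separated from the remainder of the spectrum of B; more precisely, spec(B) ∩ O_d(σ) = spec(B) ∩ U_{δ_V}(σ) and this set is nonempty and closed, where U_{δ_V}(σ) is the closed δ_V-neighborhood of σ. -/

import Mathlib

/-- `E` is the projection-valued spectral measure of the bounded self-adjoint operator `T`
on the complex Hilbert space `H`: each `E Δ` (for Borel `Δ ⊆ ℝ`) is an orthogonal
projection, `E` is multiplicative and countably additive (in the strong sense), `E ℝ = 1`,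
each `E Δ` commutes with `T`, and on the range of `E Δ` the operator `T` has its
approximate point spectrum inside the closure of `Δ` (which uniquely characterizes the
spectral measure of `T`). -/
structure IsSpectralMeasure {H : Type*} [NormedAddCommGroup H] [InnerProductSpace ℂ H]
    [CompleteSpace H] (T : H →L[ℂ] H) (E : Set ℝ → H →L[ℂ] H) : Prop where
  isSelfAdjoint : ∀ Δ : Set ℝ, MeasurableSet Δ → IsSelfAdjoint (E Δ)
  map_inter : ∀ Δ₁ Δ₂ : Set ℝ, MeasurableSet Δ₁ → MeasurableSet Δ₂ →
    E Δ₁ * E Δ₂ = E (Δ₁ ∩ Δ₂)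
  map_univ : E Set.univ = 1
  countably_additive : ∀ Δ : ℕ → Set ℝ, (∀ n, MeasurableSet (Δ n)) →
    Pairwise (Function.onFun Disjoint Δ) →
    ∀ x : H, HasSum (fun n => E (Δ n) x) (E (⋃ n, Δ n) x)
  commutes : ∀ Δ : Set ℝ, MeasurableSet Δ → Commute T (E Δ)
  spectrum_loc : ∀ Δ : Set ℝ, MeasurableSet Δ → ∀ x : H, E Δ x = x →
    ∀ μ : ℝ, Metric.infDist μ Δ * ‖x‖ ≤ ‖T x - (μ : ℂ) • x‖

theorem nonneg_of_forall_nat_le {s k : ℝ} (h : ∀ n : ℕ, k ≤ n * s) : 0 ≤ s := by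
  by_contra! hs
  obtain ⟨n, hn⟩ := exists_nat_gt (k / s)
  have h1 := h n
  rw [div_lt_iff_of_neg hs] at hn
  linarith

theorem two_mul_mul_le_of_sq_le_mul {p q v s t : ℝ} (hp : 0 ≤ p) (hq : 0 ≤ q)
    (h : v ^ 2 ≤ p * q) : 2 * v * s * t ≤ p * s ^ 2 + q * t ^ 2 := by
  refine abs_le_of_sq_le_sq' ?_ (by positivity) |>.2
  nlinarith [mul_le_mul_of_nonneg_right h (mul_nonneg (sq_nonneg s) (sq_nonneg t)),
    sq_nonneg (p * s ^ 2 - q * t ^ 2)]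

theorem exists_pos_sq_le_sub_mul_sub {p q v : ℝ} (hp : 0 < p) (hq : 0 < q) (h : v ^ 2 < p * q) :
    ∃ c > 0, c ≤ p ∧ c ≤ q ∧ v ^ 2 ≤ (p - c) * (q - c) := by
  have hpq : 0 < p + q := by positivity
  have key : (p * q - v ^ 2) / (p + q) * (p + q) = p * q - v ^ 2 := div_mul_cancel₀ _ hpq.ne'
  refine ⟨(p * q - v ^ 2) / (p + q), div_pos (by linarith) hpq, ?_, ?_, ?_⟩
  · rw [div_le_iff₀ hpq]; nlinarith [sq_nonneg v]
  · rw [div_le_iff₀ hpq]; nlinarith [sq_nonneg v]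
  · nlinarith [sq_nonneg ((p * q - v ^ 2) / (p + q))]

section HilbertSpace

open ContinuousLinearMap

variable {H : Type*} [NormedAddCommGroup H] [InnerProductSpace ℂ H]

theorem algebraMap_real_apply (μ : ℝ) (x : H) :
    algebraMap ℝ (H →L[ℂ] H) μ x = (μ : ℂ) • x := by
  rw [Algebra.algebraMap_eq_smul_one]
  simp

theorem reApplyInnerSelf_sub_smul (T : H →L[ℂ] H) (μ : ℝ) (x : H) :
    (T - (μ : ℂ) • (1 : H →L[ℂ] H)).reApplyInnerSelf x =
      T.reApplyInnerSelf x - μ * ‖x‖ ^ 2 := by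
  simp only [reApplyInnerSelf_apply, sub_apply, smul_apply, one_apply_eq_self, inner_sub_left,
    inner_smul_left, map_sub, Complex.conj_ofReal, inner_self_eq_norm_sq_to_K]
  congr 1
  simp [← Complex.ofReal_pow]

theorem norm_sub_smul_sq (T : H →L[ℂ] H) (μ : ℝ) (x : H) :
    ‖T x - (μ : ℂ) • x‖ ^ 2 =
      ‖T x‖ ^ 2 - 2 * μ * T.reApplyInnerSelf x + μ ^ 2 * ‖x‖ ^ 2 := by
  rw [norm_sub_sq (𝕜 := ℂ), inner_smul_right, norm_smul, reApplyInnerSelf_apply]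
  simp [mul_pow]
  ring

theorem norm_add_sq_of_inner_eq_zero {x y : H} (h : inner ℂ x y = 0) :
    ‖x + y‖ ^ 2 = ‖x‖ ^ 2 + ‖y‖ ^ 2 := by
  rw [norm_add_sq (𝕜 := ℂ), h]
  simp

theorem exists_le_norm_of_notMem_spectrum {T : H →L[ℂ] H} {μ : ℝ} (h : μ ∉ spectrum ℝ T) :
    ∃ c > 0, ∀ x, c * ‖x‖ ≤ ‖T x - (μ : ℂ) • x‖ := by
  rw [spectrum.notMem_iff] at h
  obtain ⟨u, hu⟩ := h
  refine ⟨(‖(↑u⁻¹ : H →L[ℂ] H)‖ + 1)⁻¹, by positivity, fun x => ?_⟩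
  rw [inv_mul_le_iff₀ (by positivity)]
  have h1 : (↑u⁻¹ : H →L[ℂ] H) ((u : H →L[ℂ] H) x) = x := by
    exact DFunLike.congr_fun (Units.inv_mul u) x
  have h2 : ‖(u : H →L[ℂ] H) x‖ = ‖T x - (μ : ℂ) • x‖ := by
    rw [hu, sub_apply, algebraMap_real_apply, norm_sub_rev]
  calc ‖x‖ = ‖(↑u⁻¹ : H →L[ℂ] H) ((u : H →L[ℂ] H) x)‖ := by rw [h1]
    _ ≤ ‖(↑u⁻¹ : H →L[ℂ] H)‖ * ‖(u : H →L[ℂ] H) x‖ := le_opNorm _ _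
    _ ≤ _ := by rw [h2]; nlinarith [norm_nonneg (T x - (μ : ℂ) • x)]

variable [CompleteSpace H]

theorem IsSelfAdjoint.inner_map {T : H →L[ℂ] H} (hT : IsSelfAdjoint T) (x y : H) :
    inner ℂ (T x) y = inner ℂ x (T y) :=
  hT.isSymmetric x y

theorem IsSelfAdjoint.re_inner_map_comm {T : H →L[ℂ] H} (hT : IsSelfAdjoint T) (x y : H) :
    RCLike.re (inner ℂ (T x) y) = RCLike.re (inner ℂ (T y) x) := by
  rw [hT.inner_map, inner_re_symm]

theorem isSelfAdjoint_sub_real_smul {T : H →L[ℂ] H} (hT : IsSelfAdjoint T) (μ : ℝ) :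
    IsSelfAdjoint (T - (μ : ℂ) • (1 : H →L[ℂ] H)) := by
  refine hT.sub (IsSelfAdjoint.smul ?_ (IsSelfAdjoint.one _))
  simp [isSelfAdjoint_iff]

/-- A self-adjoint operator that is bounded below is invertible. -/
theorem IsSelfAdjoint.isUnit_of_le_norm {T : H →L[ℂ] H} (hT : IsSelfAdjoint T) {c : ℝ}
    (hc : 0 < c) (h : ∀ x, c * ‖x‖ ≤ ‖T x‖) : IsUnit T := by
  rw [ContinuousLinearMap.isUnit_iff_bijective, bijective_iff_dense_range_and_antilipschitz]
  constructor
  · rw [Submodule.topologicalClosure_eq_top_iff, hT.isStarNormal.orthogonal_range,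
      LinearMap.ker_eq_bot']
    intro x hx
    have := h x
    rw [show T x = 0 from hx, norm_zero] at this
    exact norm_le_zero_iff.1 (by nlinarith [norm_nonneg x])
  · refine ⟨⟨c⁻¹, by positivity⟩, ContinuousLinearMap.antilipschitz_of_bound _ fun x => ?_⟩
    change ‖x‖ ≤ c⁻¹ * ‖T x‖
    rw [← div_eq_inv_mul, le_div_iff₀ hc, mul_comm]
    exact h x

theorem notMem_spectrum_of_le_norm {T : H →L[ℂ] H} (hT : IsSelfAdjoint T) {μ c : ℝ}
    (hc : 0 < c) (h : ∀ x, c * ‖x‖ ≤ ‖T x - (μ : ℂ) • x‖) : μ ∉ spectrum ℝ T := by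
  rw [spectrum.notMem_iff]
  refine IsSelfAdjoint.isUnit_of_le_norm (IsSelfAdjoint.sub (.algebraMap _ (.all μ)) hT) hc
    fun x => ?_
  rw [sub_apply, algebraMap_real_apply, norm_sub_rev]
  exact h x

theorem reApplyInnerSelf_add {T : H →L[ℂ] H} (hT : IsSelfAdjoint T) (x y : H) :
    T.reApplyInnerSelf (x + y) =
      T.reApplyInnerSelf x + T.reApplyInnerSelf y + 2 * RCLike.re (inner ℂ (T x) y) := by
  simp only [reApplyInnerSelf_apply, map_add, inner_add_left, inner_add_right]
  rw [hT.re_inner_map_comm y x]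
  ring

/-- Lower bound for the quadratic form of a diagonal operator plus an off-diagonal one. -/
theorem le_reApplyInnerSelf_add_offDiagonal {S V : H →L[ℂ] H} (hS : IsSelfAdjoint S)
    (hV : IsSelfAdjoint V) {x y : H} (hSxy : inner ℂ (S x) y = 0)
    (hVx : inner ℂ (V x) x = 0) (hVy : inner ℂ (V y) y = 0) {p q c : ℝ}
    (hp : p * ‖x‖ ^ 2 ≤ S.reApplyInnerSelf x) (hq : q * ‖y‖ ^ 2 ≤ S.reApplyInnerSelf y)
    (hcp : c ≤ p) (hcq : c ≤ q) (hc : ‖V‖ ^ 2 ≤ (p - c) * (q - c)) :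
    c * (‖x‖ ^ 2 + ‖y‖ ^ 2) ≤ (S + V).reApplyInnerSelf (x + y) := by
  have h1 : |RCLike.re (inner ℂ (V x) y)| ≤ ‖V‖ * ‖x‖ * ‖y‖ :=
    (RCLike.abs_re_le_norm _).trans ((norm_inner_le_norm _ _).trans (by gcongr; exact le_opNorm _ _))
  have h2 := two_mul_mul_le_of_sq_le_mul (s := ‖x‖) (t := ‖y‖) (sub_nonneg.2 hcp)
    (sub_nonneg.2 hcq) hc
  have h3 : (S + V).reApplyInnerSelf (x + y) = S.reApplyInnerSelf (x + y) +
      V.reApplyInnerSelf (x + y) := by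
    simp [reApplyInnerSelf_apply, inner_add_left]
  rw [h3, reApplyInnerSelf_add hS, reApplyInnerSelf_add hV, hSxy, V.reApplyInnerSelf_apply x,
    V.reApplyInnerSelf_apply y, hVx, hVy, map_zero]
  linarith [(abs_le.1 h1).1]

/-- If the quadratic form of `T - μ` is uniformly negative on the range of an orthogonal
projection and uniformly positive on its kernel, then `μ` is not in the spectrum of `T`. -/
theorem notMem_spectrum_of_form_bounds {T E : H →L[ℂ] H} (hT : IsSelfAdjoint T)
    (hE : IsSelfAdjoint E) (hEE : E * E = E) {μ c : ℝ} (hc : 0 < c)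
    (hpos : ∀ x, E x = 0 → (μ + c) * ‖x‖ ^ 2 ≤ T.reApplyInnerSelf x)
    (hneg : ∀ x, E x = x → T.reApplyInnerSelf x ≤ (μ - c) * ‖x‖ ^ 2) :
    μ ∉ spectrum ℝ T := by
  refine notMem_spectrum_of_le_norm hT hc fun x => ?_
  set S := T - (μ : ℂ) • (1 : H →L[ℂ] H) with hSdef
  have hS : IsSelfAdjoint S := isSelfAdjoint_sub_real_smul hT μ
  have hEE' : ∀ z, E (E z) = E z := fun z => DFunLike.congr_fun hEE z
  set w := E x with hw
  set u := x - E x with hu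
  have hEu : E u = 0 := by rw [hu, map_sub, hEE', sub_self]
  have hEw : E w = w := hEE' x
  have huw : inner ℂ u w = 0 := by rw [← hEw, ← hE.inner_map, hEu, inner_zero_left]
  have hx : x = u + w := by rw [hu, hw]; abel
  have hSx : T x - (μ : ℂ) • x = S x := by simp [hSdef]
  rw [hSx]
  have h1 := hpos u hEu
  have h2 := hneg w hEw
  have h3 := reApplyInnerSelf_sub_smul T μ u
  have h4 := reApplyInnerSelf_sub_smul T μ w
  rw [← hSdef] at h3 h4
  have h5 : RCLike.re (inner ℂ (S x) (u - w)) =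
      S.reApplyInnerSelf u - S.reApplyInnerSelf w := by
    rw [hx]
    simp only [reApplyInnerSelf_apply, map_add, inner_add_left, inner_sub_right, map_sub]
    rw [hS.re_inner_map_comm w u]
    ring
  have h6 : ‖x‖ ^ 2 = ‖u‖ ^ 2 + ‖w‖ ^ 2 := by rw [hx]; exact norm_add_sq_of_inner_eq_zero huw
  have h7 : ‖u - w‖ ^ 2 = ‖u‖ ^ 2 + ‖w‖ ^ 2 := by
    rw [sub_eq_add_neg, norm_add_sq_of_inner_eq_zero (by rw [inner_neg_right, huw, neg_zero]),
      norm_neg]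
  have h8 : ‖u - w‖ = ‖x‖ := by
    rw [← sq_eq_sq₀ (norm_nonneg _) (norm_nonneg _), h6, h7]
  have h9 : RCLike.re (inner ℂ (S x) (u - w)) ≤ ‖S x‖ * ‖x‖ := by
    rw [← h8]
    exact (RCLike.re_le_norm _).trans (norm_inner_le_norm _ _)
  rcases (norm_nonneg x).eq_or_lt with h0 | h0
  · rw [← h0, mul_zero]; exact norm_nonneg _
  · refine le_of_mul_le_mul_right ?_ h0
    nlinarith

/-- The spectral projection of `T` onto the part of the spectrum above a gap `[μ₁, μ₂]`. -/
theorem exists_projection_of_spectral_gap {T : H →L[ℂ] H} (hT : IsSelfAdjoint T) {μ₁ μ₂ : ℝ}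
    (hμ : μ₁ < μ₂) (hgap : ∀ t ∈ spectrum ℝ T, μ₁ ≤ t → μ₂ < t) :
    ∃ P : H →L[ℂ] H, IsSelfAdjoint P ∧ P * P = P ∧
      (∀ x, P x = x → μ₂ * ‖x‖ ^ 2 ≤ T.reApplyInnerSelf x) ∧
      ∃ C : ℝ, ∀ x, T.reApplyInnerSelf x ≤ μ₁ * ‖x‖ ^ 2 + C * ‖P x‖ ^ 2 := by
  obtain ⟨f, hfc, hf⟩ : ∃ f : ℝ → ℝ, Continuous f ∧
      ∀ t ∈ spectrum ℝ T, (t < μ₁ ∧ f t = 0) ∨ (μ₂ < t ∧ f t = 1) := by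
    have hμ' : 0 < μ₂ - μ₁ := sub_pos.2 hμ
    refine ⟨fun t => max 0 (min 1 ((t - μ₁) / (μ₂ - μ₁))), by fun_prop, fun t ht => ?_⟩
    rcases lt_or_ge t μ₁ with h | h
    · refine Or.inl ⟨h, max_eq_left ((min_le_right _ _).trans ?_)⟩
      exact div_nonpos_of_nonpos_of_nonneg (by linarith) hμ'.le
    · have h2 := hgap t ht h
      refine Or.inr ⟨h2, ?_⟩
      have : min 1 ((t - μ₁) / (μ₂ - μ₁)) = 1 := by
        refine min_eq_left ?_
        rw [le_div_iff₀ hμ']; linarith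
      simp only [this]
      norm_num
  have hfc' : ContinuousOn f (spectrum ℝ T) := hfc.continuousOn
  have hsub : ∀ μ : ℝ, ContinuousOn (fun t : ℝ => t - μ) (spectrum ℝ T) := fun μ => by fun_prop
  have hshift : ∀ μ : ℝ, cfc (fun t => t - μ) T = T - (μ : ℂ) • (1 : H →L[ℂ] H) := by
    intro μ
    rw [cfc_sub (fun t => t) (fun _ => μ) T continuousOn_id continuousOn_const, cfc_id' ℝ T,
      cfc_const μ T]
    ext x
    simp
  have hPP : cfc f T * cfc f T = cfc f T := by
    rw [← cfc_mul f f T hfc' hfc']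
    refine cfc_congr fun t ht => ?_
    rcases hf t ht with h | h <;> simp [h.2]
  have hupper : 0 ≤ (T - (μ₂ : ℂ) • (1 : H →L[ℂ] H)) * cfc f T := by
    rw [← hshift, ← cfc_mul (fun t => t - μ₂) f T (hsub _) hfc']
    refine cfc_nonneg fun t ht => ?_
    rcases hf t ht with h | h <;> simp [h.2, h.1.le]
  have hlower : 0 ≤
      (T - (μ₁ : ℂ) • (1 : H →L[ℂ] H)) * cfc f T - (T - (μ₁ : ℂ) • (1 : H →L[ℂ] H)) := by
    rw [← hshift, ← cfc_mul (fun t => t - μ₁) f T (hsub _) hfc',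
      ← cfc_sub (fun t => (t - μ₁) * f t) (fun t => t - μ₁) T ((hsub _).mul hfc') (hsub _)]
    refine cfc_nonneg fun t ht => ?_
    rcases hf t ht with h | h <;> simp [h.2, h.1.le]
  have hcomm : (T - (μ₁ : ℂ) • (1 : H →L[ℂ] H)) * cfc f T =
      cfc f T * (T - (μ₁ : ℂ) • (1 : H →L[ℂ] H)) := by
    rw [← hshift]
    exact (cfc_commute_cfc _ f T).eq
  have hP : IsSelfAdjoint (cfc f T) := cfc_predicate f T
  generalize cfc f T = P at *
  rw [nonneg_iff_isPositive] at hupper hlower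
  refine ⟨P, hP, hPP, fun x hx => ?_, ‖T - (μ₁ : ℂ) • (1 : H →L[ℂ] H)‖, fun x => ?_⟩
  · have h := hupper.re_inner_nonneg_left x
    rw [show ((T - (μ₂ : ℂ) • (1 : H →L[ℂ] H)) * P) x = (T - (μ₂ : ℂ) • (1 : H →L[ℂ] H)) (P x)
      from rfl, hx, ← reApplyInnerSelf_apply, reApplyInnerSelf_sub_smul] at h
    linarith
  · have h := hlower.re_inner_nonneg_left x
    rw [sub_apply, inner_sub_left, map_sub,
      ← (T - (μ₁ : ℂ) • (1 : H →L[ℂ] H)).reApplyInnerSelf_apply, reApplyInnerSelf_sub_smul] at h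
    set S := T - (μ₁ : ℂ) • (1 : H →L[ℂ] H)
    have h1 : inner ℂ ((S * P) x) x = inner ℂ (S (P x)) (P x) := by
      rw [← hP.inner_map]
      have h2 : P (S (P x)) = S (P (P x)) := (DFunLike.congr_fun hcomm (P x)).symm
      rw [h2, show P (P x) = P x from DFunLike.congr_fun hPP x]
      rfl
    rw [h1] at h
    have h3 : RCLike.re (inner ℂ (S (P x)) (P x)) ≤ ‖S‖ * ‖P x‖ * ‖P x‖ :=
      (RCLike.re_le_norm _).trans ((norm_inner_le_norm _ _).trans (by gcongr; exact le_opNorm _ _))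
    linarith [sq ‖P x‖]

/-- If the quadratic form of `T - μ₁` is uniformly positive on the kernel of `E`, that of
`T - μ₂` is uniformly negative on the kernel of `F`, and the range of `F` together with a nonzero
vector orthogonal to it lies in the kernel of `E`, then `T` has spectrum between `μ₁` and `μ₂`. -/
theorem exists_mem_spectrum_of_form_bounds {T E F : H →L[ℂ] H} (hT : IsSelfAdjoint T)
    (hF : IsSelfAdjoint F) (hEF : E * F = 0) {μ₁ μ₂ c : ℝ} (hμ : μ₁ < μ₂) (hc : 0 < c)
    (hpos : ∀ x, E x = 0 → (μ₁ + c) * ‖x‖ ^ 2 ≤ T.reApplyInnerSelf x)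
    (hneg : ∀ x, F x = 0 → T.reApplyInnerSelf x ≤ (μ₂ - c) * ‖x‖ ^ 2)
    {x₀ : H} (hx₀ : x₀ ≠ 0) (hEx₀ : E x₀ = 0) (hFx₀ : F x₀ = 0) :
    ∃ μ ∈ spectrum ℝ T, μ₁ ≤ μ ∧ μ ≤ μ₂ := by
  by_contra! hgap
  obtain ⟨P, hP, hPP, hPup, C, hPlow⟩ := exists_projection_of_spectral_gap hT hμ hgap
  have hPP' : ∀ z, P (P z) = P z := fun z => DFunLike.congr_fun hPP z
  have hmem : P x₀ ∈ (P * F).range.topologicalClosure := by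
    set K := (P * F).range.topologicalClosure with hK
    have : CompleteSpace K := (Submodule.isClosed_topologicalClosure _).completeSpace_coe
    obtain ⟨k, hk, w, hw, hkw⟩ := K.exists_add_mem_mem_orthogonal (P x₀)
    have hPk : P k = k := by
      have hcl : IsClosed {z | P z = z} := isClosed_eq P.continuous continuous_id
      have hsub : K ≤ LinearMap.eqLocus P.toLinearMap LinearMap.id := by
        refine Submodule.topologicalClosure_minimal _ ?_ hcl
        rintro _ ⟨z, rfl⟩
        exact hPP' (F z)
      exact hsub hk
    have hPw : P w = w := by
      have h1 : w = P x₀ - k := by rw [hkw]; abel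
      rw [h1, map_sub, hPP', hPk]
    have hFw : F w = 0 := by
      rw [← inner_self_eq_zero (𝕜 := ℂ), hF.inner_map]
      have h1 : inner ℂ (P (F (F w))) w = 0 :=
        hw _ (Submodule.le_topologicalClosure _ ⟨F w, rfl⟩)
      rw [hP.inner_map, hPw] at h1
      rw [← inner_conj_symm, h1, map_zero]
    have hw0 : w = 0 := by
      have h1 := hneg w hFw
      have h2 := hPup w hPw
      have h3 : ‖w‖ ^ 2 ≤ 0 := by nlinarith [sq_nonneg ‖w‖]
      exact norm_eq_zero.1 (pow_eq_zero_iff two_ne_zero |>.1 (le_antisymm h3 (sq_nonneg _)))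
    rw [hkw, hw0, add_zero]
    exact hk
  have hbound : ∀ y, c * ‖x₀‖ ^ 2 ≤ C * ‖P x₀ - (P * F) y‖ ^ 2 := by
    intro y
    have hz := hpos (x₀ - F y) (by
      rw [map_sub, hEx₀, show E (F y) = 0 from DFunLike.congr_fun hEF y, sub_zero])
    have hz' := hPlow (x₀ - F y)
    have horth : inner ℂ x₀ (-(F y)) = 0 := by
      rw [inner_neg_right, ← hF.inner_map, hFx₀, inner_zero_left, neg_zero]
    have hnorm := norm_add_sq_of_inner_eq_zero horth
    rw [← sub_eq_add_neg, norm_neg] at hnorm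
    rw [show (P * F) y = P (F y) from rfl, ← map_sub]
    nlinarith [mul_nonneg hc.le (sq_nonneg ‖F y‖)]
  have hcl : IsClosed {z : H | c * ‖x₀‖ ^ 2 ≤ C * ‖P x₀ - z‖ ^ 2} :=
    isClosed_le continuous_const (by fun_prop)
  have hlim : P x₀ ∈ {z : H | c * ‖x₀‖ ^ 2 ≤ C * ‖P x₀ - z‖ ^ 2} := by
    refine closure_minimal ?_ hcl hmem
    rintro _ ⟨y, rfl⟩
    exact hbound y
  have hfin : c * ‖x₀‖ ^ 2 ≤ 0 := by simpa using hlim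
  have : 0 < c * ‖x₀‖ ^ 2 := by positivity
  linarith

namespace IsSpectralMeasure

variable {T : H →L[ℂ] H} {E : Set ℝ → H →L[ℂ] H}

theorem map_empty (hE : IsSpectralMeasure T E) : E ∅ = 0 := by
  ext x
  have h := hE.countably_additive (fun _ => ∅) (fun _ => .empty)
    (fun _ _ _ => by simp [Function.onFun]) x
  have := h.summable.tendsto_atTop_zero
  simpa using tendsto_nhds_unique tendsto_const_nhds this

theorem map_union (hE : IsSpectralMeasure T E) {Δ₁ Δ₂ : Set ℝ} (h₁ : MeasurableSet Δ₁)
    (h₂ : MeasurableSet Δ₂) (hd : Disjoint Δ₁ Δ₂) : E (Δ₁ ∪ Δ₂) = E Δ₁ + E Δ₂ := by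
  ext x
  let Δ : ℕ → Set ℝ := fun n => if n = 0 then Δ₁ else if n = 1 then Δ₂ else ∅
  have hU : ⋃ n, Δ n = Δ₁ ∪ Δ₂ := by
    ext t
    simp only [Set.mem_iUnion, Set.mem_union]
    constructor
    · rintro ⟨n, hn⟩
      simp only [Δ] at hn
      split_ifs at hn
      exacts [Or.inl hn, Or.inr hn, absurd hn (Set.notMem_empty t)]
    · rintro (h | h)
      exacts [⟨0, by simpa [Δ] using h⟩, ⟨1, by simpa [Δ] using h⟩]
  have hm : ∀ n, MeasurableSet (Δ n) := by
    intro n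
    simp only [Δ]
    split_ifs
    exacts [h₁, h₂, .empty]
  have hp : Pairwise (Function.onFun Disjoint Δ) := by
    intro i j hij
    simp only [Function.onFun, Δ]
    split_ifs with h h' h'' h' h'' <;> first | omega | simp [hd.symm]
  have h := hE.countably_additive Δ hm hp x
  rw [hU] at h
  have h' : HasSum (fun n => E (Δ n) x) (∑ n ∈ Finset.range 2, E (Δ n) x) := by
    refine hasSum_sum_of_ne_finset_zero fun n hn => ?_
    have hn0 : n ≠ 0 := by rintro rfl; simp at hn
    have hn1 : n ≠ 1 := by rintro rfl; simp at hn
    simp [Δ, hn0, hn1, hE.map_empty]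
  simpa [Finset.sum_range_succ, Δ] using h.unique h'

theorem apply_of_subset (hE : IsSpectralMeasure T E) {Δ₁ Δ₂ : Set ℝ} (h₁ : MeasurableSet Δ₁)
    (h₂ : MeasurableSet Δ₂) (hs : Δ₁ ⊆ Δ₂) {x : H} (hx : E Δ₁ x = x) : E Δ₂ x = x := by
  have h := DFunLike.congr_fun (hE.map_inter Δ₂ Δ₁ h₂ h₁) x
  rw [Set.inter_eq_right.2 hs, hx] at h
  exact (congrArg _ hx.symm).trans h

theorem apply_apply_self (hE : IsSpectralMeasure T E) {Δ : Set ℝ} (h : MeasurableSet Δ) (x : H) :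
    E Δ (E Δ x) = E Δ x := by
  have := DFunLike.congr_fun (hE.map_inter Δ Δ h h) x
  rwa [Set.inter_self] at this

theorem map_mul_of_disjoint (hE : IsSpectralMeasure T E) {Δ₁ Δ₂ : Set ℝ}
    (h₁ : MeasurableSet Δ₁) (h₂ : MeasurableSet Δ₂) (hd : Disjoint Δ₁ Δ₂) :
    E Δ₁ * E Δ₂ = 0 := by
  rw [hE.map_inter _ _ h₁ h₂, hd.inter_eq, hE.map_empty]

theorem inner_eq_zero (hE : IsSpectralMeasure T E) {Δ₁ Δ₂ : Set ℝ} (h₁ : MeasurableSet Δ₁)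
    (h₂ : MeasurableSet Δ₂) (hd : Disjoint Δ₁ Δ₂) {x y : H} (hx : E Δ₁ x = x)
    (hy : E Δ₂ y = y) : inner ℂ x y = 0 := by
  rw [← hx, (hE.isSelfAdjoint _ h₁).inner_map, ← hy,
    show E Δ₁ (E Δ₂ y) = 0 from DFunLike.congr_fun (hE.map_mul_of_disjoint h₁ h₂ hd) y,
    inner_zero_right]

theorem apply_map (hE : IsSpectralMeasure T E) {Δ : Set ℝ} (h : MeasurableSet Δ) {x : H}
    (hx : E Δ x = x) : E Δ (T x) = T x := by
  have := DFunLike.congr_fun (hE.commutes Δ h).eq x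
  exact this.symm.trans (congrArg T hx)

theorem eq_zero_of_isEmpty (hE : IsSpectralMeasure T E) {Δ : Set ℝ} (h : ¬ Δ.Nonempty) {x : H}
    (hx : E Δ x = x) : x = 0 := by
  rw [← hx, Set.not_nonempty_iff_eq_empty.1 h, hE.map_empty, zero_apply]

theorem mul_norm_le (hE : IsSpectralMeasure T E) {Δ : Set ℝ} (h : MeasurableSet Δ) {x : H}
    (hx : E Δ x = x) {μ c : ℝ} (hc : ∀ t ∈ Δ, c ≤ |t - μ|) :
    c * ‖x‖ ≤ ‖T x - (μ : ℂ) • x‖ := by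
  by_cases hne : Δ.Nonempty
  · refine le_trans ?_ (hE.spectrum_loc Δ h x hx μ)
    gcongr
    refine (Metric.le_infDist hne).2 fun t ht => ?_
    rw [dist_comm, Real.dist_eq]
    exact hc t ht
  · simp [hE.eq_zero_of_isEmpty hne hx]

theorem mul_sq_le_reApplyInnerSelf (hE : IsSpectralMeasure T E) {Δ : Set ℝ}
    (h : MeasurableSet Δ) {x : H} (hx : E Δ x = x) {α : ℝ} (hα : ∀ t ∈ Δ, α ≤ t) :
    α * ‖x‖ ^ 2 ≤ T.reApplyInnerSelf x := by
  rw [← sub_nonneg]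
  refine nonneg_of_forall_nat_le (k := -‖T x - (α : ℂ) • x‖ ^ 2 / 2) fun n => ?_
  have h1 := hE.mul_norm_le h hx (μ := α - n) (c := n) fun t ht =>
    le_trans (by linarith [hα t ht]) (le_abs_self _)
  have h2 := pow_le_pow_left₀ (by positivity) h1 2
  rw [norm_sub_smul_sq] at h2
  rw [norm_sub_smul_sq]
  nlinarith

theorem reApplyInnerSelf_le_mul_sq (hE : IsSpectralMeasure T E) {Δ : Set ℝ}
    (h : MeasurableSet Δ) {x : H} (hx : E Δ x = x) {α : ℝ} (hα : ∀ t ∈ Δ, t ≤ α) :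
    T.reApplyInnerSelf x ≤ α * ‖x‖ ^ 2 := by
  rw [← sub_nonneg]
  refine nonneg_of_forall_nat_le (k := -‖T x - (α : ℂ) • x‖ ^ 2 / 2) fun n => ?_
  have h1 := hE.mul_norm_le h hx (μ := α + n) (c := n) fun t ht =>
    le_trans (by linarith [hα t ht]) (neg_le_abs _)
  have h2 := pow_le_pow_left₀ (by positivity) h1 2
  rw [norm_sub_smul_sq] at h2
  rw [norm_sub_smul_sq]
  nlinarith

theorem norm_sub_smul_le (hE : IsSpectralMeasure T E) (hT : IsSelfAdjoint T) {Δ : Set ℝ}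
    (h : MeasurableSet Δ) {x : H} (hx : E Δ x = x) {μ ε : ℝ} (hε : 0 < ε)
    (hΔ : ∀ t ∈ Δ, |t - μ| ≤ ε) : ‖T x - (μ : ℂ) • x‖ ≤ ε * ‖x‖ := by
  set S := T - (μ : ℂ) • (1 : H →L[ℂ] H) with hSdef
  have hS : IsSelfAdjoint S := isSelfAdjoint_sub_real_smul hT μ
  have hform : ∀ z, E Δ z = z → |S.reApplyInnerSelf z| ≤ ε * ‖z‖ ^ 2 := by
    intro z hz
    have h1 := hE.mul_sq_le_reApplyInnerSelf h hz (α := μ - ε) fun t ht => by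
      linarith [(abs_le.1 (hΔ t ht)).1]
    have h2 := hE.reApplyInnerSelf_le_mul_sq h hz (α := μ + ε) fun t ht => by
      linarith [(abs_le.1 (hΔ t ht)).2]
    rw [hSdef, reApplyInnerSelf_sub_smul, abs_le]
    constructor <;> linarith
  have hSx : T x - (μ : ℂ) • x = S x := by simp [hSdef]
  rw [hSx]
  set y := ((ε⁻¹ : ℝ) : ℂ) • S x with hy
  have hEy : E Δ y = y := by
    rw [hy, map_smul, ← hSx, map_sub, map_smul, hE.apply_map h hx, hx]
  have h1 := (abs_le.1 (hform (x + y) (by rw [map_add, hx, hEy]))).2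
  have h2 := (abs_le.1 (hform (x + -y) (by rw [map_add, map_neg, hx, hEy]))).1
  rw [reApplyInnerSelf_add hS, norm_add_sq (𝕜 := ℂ)] at h1 h2
  rw [inner_neg_right, inner_neg_right, map_neg, map_neg, norm_neg] at h2
  have h3 : S.reApplyInnerSelf (-y) = S.reApplyInnerSelf y := by
    simp [reApplyInnerSelf_apply]
  rw [h3] at h2
  have h4 : RCLike.re (inner ℂ (S x) y) = ε⁻¹ * ‖S x‖ ^ 2 := by
    rw [hy, inner_smul_right, inner_self_eq_norm_sq_to_K]
    simp [← Complex.ofReal_pow]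
  have h5 : ‖y‖ = ε⁻¹ * ‖S x‖ := by
    rw [hy, norm_smul, Complex.norm_real, Real.norm_of_nonneg (by positivity)]
  rw [h4, h5] at h1 h2
  have h6 : ε⁻¹ * ‖S x‖ ^ 2 ≤ ε * ‖x‖ ^ 2 := by
    have h7 : ε * (ε⁻¹ * ‖S x‖) ^ 2 = ε⁻¹ * ‖S x‖ ^ 2 := by field_simp
    linarith
  rw [inv_mul_le_iff₀ hε] at h6
  refine le_of_sq_le_sq ?_ (by positivity)
  linarith [mul_pow ε ‖x‖ 2, sq ε]

theorem map_iUnion_eq_zero (hE : IsSpectralMeasure T E) {Δ : ℕ → Set ℝ}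
    (hm : ∀ n, MeasurableSet (Δ n)) (h0 : ∀ n, E (Δ n) = 0) : E (⋃ n, Δ n) = 0 := by
  ext x
  have h := hE.countably_additive (disjointed Δ) (fun n => MeasurableSet.disjointed hm n)
    (disjoint_disjointed Δ) x
  rw [iUnion_disjointed] at h
  have hz : ∀ n, E (disjointed Δ n) = 0 := fun n => by
    rw [← Set.inter_eq_right.2 (disjointed_subset Δ n),
      ← hE.map_inter _ _ (hm n) (MeasurableSet.disjointed hm n), h0, zero_mul]
  simp only [hz, zero_apply] at h
  exact h.unique hasSum_zero

theorem map_mono_eq_zero (hE : IsSpectralMeasure T E) {Δ₁ Δ₂ : Set ℝ} (h₁ : MeasurableSet Δ₁)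
    (h₂ : MeasurableSet Δ₂) (hs : Δ₁ ⊆ Δ₂) (h0 : E Δ₂ = 0) : E Δ₁ = 0 := by
  rw [← Set.inter_eq_right.2 hs, ← hE.map_inter _ _ h₂ h₁, h0, zero_mul]

/-- The spectral measure vanishes off the spectrum. -/
theorem map_compl_spectrum (hE : IsSpectralMeasure T E) (hT : IsSelfAdjoint T) :
    E (spectrum ℝ T)ᶜ = 0 := by
  have hloc : ∀ μ ∈ (spectrum ℝ T)ᶜ, ∃ ε > 0, E (Metric.ball μ ε) = 0 := by
    intro μ hμ
    obtain ⟨c, hc, hcb⟩ := exists_le_norm_of_notMem_spectrum hμ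
    refine ⟨c / 2, by positivity, ?_⟩
    ext z
    have h1 := hE.apply_apply_self (Δ := Metric.ball μ (c / 2)) measurableSet_ball z
    have h2 := hE.norm_sub_smul_le hT measurableSet_ball h1 (half_pos hc) (μ := μ)
      fun t ht => (Metric.mem_ball.1 ht).le
    have h3 := hcb (E (Metric.ball μ (c / 2)) z)
    rw [zero_apply, ← norm_le_zero_iff]
    nlinarith [norm_nonneg (E (Metric.ball μ (c / 2)) z)]
  choose! ε hε hEε using hloc
  obtain ⟨t, hts, htc, hcov⟩ := TopologicalSpace.countable_cover_nhdsWithin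
    (f := fun μ => Metric.ball μ (ε μ)) (s := (spectrum ℝ T)ᶜ)
    fun μ hμ => mem_nhdsWithin_of_mem_nhds (Metric.ball_mem_nhds μ (hε μ hμ))
  have hmeas : MeasurableSet (spectrum ℝ T)ᶜ := (spectrum.isClosed T).measurableSet.compl
  rcases t.eq_empty_or_nonempty with rfl | hne
  · have : (spectrum ℝ T)ᶜ = ∅ := by simpa using hcov
    rw [this, hE.map_empty]
  · obtain ⟨g, rfl⟩ := htc.exists_eq_range hne
    refine hE.map_mono_eq_zero hmeas (MeasurableSet.iUnion fun n => measurableSet_ball)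
      (by simpa using hcov) (hE.map_iUnion_eq_zero (Δ := fun n => Metric.ball (g n) (ε (g n)))
        (fun n => measurableSet_ball) fun n => hEε _ (hts ⟨n, rfl⟩))

theorem map_spectrum (hE : IsSpectralMeasure T E) (hT : IsSelfAdjoint T) :
    E (spectrum ℝ T) = 1 := by
  have hmeas : MeasurableSet (spectrum ℝ T) := (spectrum.isClosed T).measurableSet
  have h := hE.map_union hmeas hmeas.compl disjoint_compl_right
  rw [Set.union_compl_self, hE.map_univ, hE.map_compl_spectrum hT, add_zero] at h
  exact h.symm

theorem norm_apply_le (hE : IsSpectralMeasure T E) {Δ : Set ℝ} (h : MeasurableSet Δ) (x : H) :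
    ‖E Δ x‖ ≤ ‖x‖ := by
  rcases (norm_nonneg (E Δ x)).eq_or_lt with h0 | h0
  · rw [← h0]; exact norm_nonneg x
  · refine le_of_mul_le_mul_left ?_ h0
    rw [← inner_self_eq_norm_mul_norm (𝕜 := ℂ), ← (hE.isSelfAdjoint Δ h).inner_map,
      hE.apply_apply_self h]
    exact (RCLike.re_le_norm _).trans (norm_inner_le_norm _ _)

theorem inner_offDiagonal_eq_zero (hE : IsSpectralMeasure T E) {Δ : Set ℝ}
    (h : MeasurableSet Δ) {V : H →L[ℂ] H} (hV : E Δ * V * E Δ = 0) {x : H} (hx : E Δ x = x) :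
    inner ℂ (V x) x = 0 := by
  have h1 : E Δ (V (E Δ x)) = 0 := DFunLike.congr_fun hV x
  rw [hx] at h1
  nth_rewrite 2 [← hx]
  rw [← (hE.isSelfAdjoint Δ h).inner_map, h1, inner_zero_left]

theorem le_reApplyInnerSelf_add (hE : IsSpectralMeasure T E) (hT : IsSelfAdjoint T)
    {V : H →L[ℂ] H} (hV : IsSelfAdjoint V) {Δ₁ Δ₂ : Set ℝ} (h₁ : MeasurableSet Δ₁)
    (h₂ : MeasurableSet Δ₂) (hd : Disjoint Δ₁ Δ₂)
    (hV₁ : ∀ z, E Δ₁ z = z → inner ℂ (V z) z = 0) (hV₂ : ∀ z, E Δ₂ z = z → inner ℂ (V z) z = 0)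
    {p q c : ℝ} (hp : ∀ t ∈ Δ₁, p ≤ t) (hq : ∀ t ∈ Δ₂, q ≤ t) (hcp : c ≤ p) (hcq : c ≤ q)
    (hc : ‖V‖ ^ 2 ≤ (p - c) * (q - c)) {x : H} (hx : E Δ₁ x + E Δ₂ x = x) :
    c * ‖x‖ ^ 2 ≤ (T + V).reApplyInnerSelf x := by
  have e₁ := hE.apply_apply_self h₁ x
  have e₂ := hE.apply_apply_self h₂ x
  have h := le_reApplyInnerSelf_add_offDiagonal hT hV
    (hE.inner_eq_zero h₁ h₂ hd (hE.apply_map h₁ e₁) e₂) (hV₁ _ e₁) (hV₂ _ e₂)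
    (hE.mul_sq_le_reApplyInnerSelf h₁ e₁ hp) (hE.mul_sq_le_reApplyInnerSelf h₂ e₂ hq) hcp hcq hc
  rwa [← norm_add_sq_of_inner_eq_zero (hE.inner_eq_zero h₁ h₂ hd e₁ e₂), hx] at h

theorem reApplyInnerSelf_add_le (hE : IsSpectralMeasure T E) (hT : IsSelfAdjoint T)
    {V : H →L[ℂ] H} (hV : IsSelfAdjoint V) {Δ₁ Δ₂ : Set ℝ} (h₁ : MeasurableSet Δ₁)
    (h₂ : MeasurableSet Δ₂) (hd : Disjoint Δ₁ Δ₂)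
    (hV₁ : ∀ z, E Δ₁ z = z → inner ℂ (V z) z = 0) (hV₂ : ∀ z, E Δ₂ z = z → inner ℂ (V z) z = 0)
    {p q c : ℝ} (hp : ∀ t ∈ Δ₁, t ≤ p) (hq : ∀ t ∈ Δ₂, t ≤ q) (hcp : p ≤ c) (hcq : q ≤ c)
    (hc : ‖V‖ ^ 2 ≤ (c - p) * (c - q)) {x : H} (hx : E Δ₁ x + E Δ₂ x = x) :
    (T + V).reApplyInnerSelf x ≤ c * ‖x‖ ^ 2 := by
  have e₁ := hE.apply_apply_self h₁ x
  have e₂ := hE.apply_apply_self h₂ x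
  have hneg : ∀ (S : H →L[ℂ] H) (z : H), (-S).reApplyInnerSelf z = -S.reApplyInnerSelf z :=
    fun S z => by simp [reApplyInnerSelf_apply]
  have h := le_reApplyInnerSelf_add_offDiagonal (S := -T) (V := -V) (p := -p) (q := -q) (c := -c)
    hT.neg hV.neg (x := E Δ₁ x) (y := E Δ₂ x)
    (by rw [neg_apply, inner_neg_left, hE.inner_eq_zero h₁ h₂ hd (hE.apply_map h₁ e₁) e₂, neg_zero])
    (by rw [neg_apply, inner_neg_left, hV₁ _ e₁, neg_zero])
    (by rw [neg_apply, inner_neg_left, hV₂ _ e₂, neg_zero])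
    (by rw [hneg]; linarith [hE.reApplyInnerSelf_le_mul_sq h₁ e₁ hp])
    (by rw [hneg]; linarith [hE.reApplyInnerSelf_le_mul_sq h₂ e₂ hq])
    (by linarith) (by linarith) (by rw [norm_neg]; linarith)
  rw [← norm_add_sq_of_inner_eq_zero (hE.inner_eq_zero h₁ h₂ hd e₁ e₂), hx,
    show -T + -V = -(T + V) by abel, hneg] at h
  linarith

/-- A point whose distances to two complementary spectral parts have a product exceeding the
squared norm of an off-diagonal perturbation stays in the resolvent set. -/
theorem notMem_spectrum_add (hE : IsSpectralMeasure T E) (hT : IsSelfAdjoint T)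
    {V : H →L[ℂ] H} (hV : IsSelfAdjoint V) {Δ₁ Δ₂ : Set ℝ} (h₁ : MeasurableSet Δ₁)
    (h₂ : MeasurableSet Δ₂) (hsum : E Δ₁ + E Δ₂ = 1) (hV₁ : E Δ₁ * V * E Δ₁ = 0)
    (hV₂ : E Δ₂ * V * E Δ₂ = 0) {μ r s : ℝ} (hr : 0 < r) (hs : 0 < s)
    (hrs : ‖V‖ ^ 2 < r * s) (hr' : ∀ t ∈ Δ₁, r ≤ |t - μ|) (hs' : ∀ t ∈ Δ₂, s ≤ |t - μ|) :
    μ ∉ spectrum ℝ (T + V) := by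
  have hsum' : ∀ z, E Δ₁ z + E Δ₂ z = z := fun z => DFunLike.congr_fun hsum z
  have key : ∀ {Δ Δ' : Set ℝ} {c : ℝ} (x : H), MeasurableSet Δ → E Δ x + E Δ' x = x →
      E Δ * V * E Δ = 0 → (∀ t ∈ Δ, c ≤ |t - μ|) →
      c * ‖E Δ x‖ ≤ ‖(T + V) x - (μ : ℂ) • x‖ + ‖V‖ * ‖E Δ' x‖ := by
    intro Δ Δ' c x h hx hVΔ hc
    have h1 := hE.mul_norm_le h (hE.apply_apply_self h x) hc
    have hTx : T (E Δ x) = E Δ (T x) := DFunLike.congr_fun (hE.commutes Δ h).eq x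
    have hVx : E Δ (V x) = E Δ (V (E Δ' x)) := by
      have h2 : E Δ (V (E Δ x)) = 0 := DFunLike.congr_fun hVΔ x
      nth_rewrite 1 [← hx]
      rw [map_add, map_add, h2, zero_add]
    have h3 : T (E Δ x) - (μ : ℂ) • E Δ x =
        E Δ ((T + V) x - (μ : ℂ) • x) - E Δ (V (E Δ' x)) := by
      rw [← hVx, hTx, add_apply, map_sub, map_add, map_smul]
      abel
    rw [h3] at h1
    calc _ ≤ _ := h1
      _ ≤ ‖E Δ ((T + V) x - (μ : ℂ) • x)‖ + ‖E Δ (V (E Δ' x))‖ := norm_sub_le _ _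
      _ ≤ _ := add_le_add (hE.norm_apply_le h _) ((hE.norm_apply_le h _).trans (le_opNorm _ _))
  have hv := norm_nonneg V
  have hgap : 0 < r * s - ‖V‖ ^ 2 := sub_pos.2 hrs
  refine notMem_spectrum_of_le_norm (hT.add hV)
    (c := (r * s - ‖V‖ ^ 2) / (r + s + 2 * ‖V‖)) (by positivity) fun x => ?_
  have h1 := key x h₁ (hsum' x) hV₁ hr'
  have h2 := key x h₂ ((add_comm _ _).trans (hsum' x)) hV₂ hs'
  have h3 : ‖x‖ ≤ ‖E Δ₁ x‖ + ‖E Δ₂ x‖ := by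
    nth_rewrite 1 [← hsum' x]
    exact norm_add_le _ _
  rw [div_mul_eq_mul_div, div_le_iff₀ (by positivity)]
  have h4 := mul_le_mul_of_nonneg_left h1 hs.le
  have h5 := mul_le_mul_of_nonneg_left h2 hv
  have h6 := mul_le_mul_of_nonneg_left h2 hr.le
  have h7 := mul_le_mul_of_nonneg_left h1 hv
  have h8 := mul_le_mul_of_nonneg_left h3 hgap.le
  linarith

end IsSpectralMeasure

end HilbertSpace

theorem mul_tan_half_arctan_spec {v d : ℝ} (hv : 0 ≤ v) (hd : 0 < d) :
    0 ≤ v * Real.tan (Real.arctan (2 * v / d) / 2) ∧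
      v * Real.tan (Real.arctan (2 * v / d) / 2) *
        (v * Real.tan (Real.arctan (2 * v / d) / 2) + d) = v ^ 2 := by
  set θ := Real.arctan (2 * v / d) with hθ
  have h0 : 0 ≤ θ := Real.arctan_nonneg.2 (by positivity)
  have h1 : θ < Real.pi / 2 := Real.arctan_lt_pi_div_two _
  have ht0 : 0 ≤ Real.tan (θ / 2) := Real.tan_nonneg_of_nonneg_of_le_pi_div_two (by linarith)
    (by linarith)
  have ht1 : Real.tan (θ / 2) < 1 := by
    rw [← Real.tan_pi_div_four]
    exact Real.tan_lt_tan_of_lt_of_lt_pi_div_two (by linarith) (by linarith) (by linarith)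
  have h2 : Real.tan (2 * (θ / 2)) = 2 * v / d := by
    rw [mul_div_cancel₀ _ (two_ne_zero' ℝ), hθ, Real.tan_arctan]
  rw [Real.tan_two_mul] at h2
  set t := Real.tan (θ / 2)
  have h3 : 0 < 1 - t ^ 2 := by nlinarith
  rw [div_eq_div_iff h3.ne' hd.ne'] at h2
  exact ⟨by positivity, by linear_combination v / 2 * h2⟩

theorem exists_endpoints_of_disjoint_convexHull {σ Sig : Set ℝ} (hσ : IsCompact σ)
    (hne : σ.Nonempty) (hconv : Disjoint (convexHull ℝ σ) Sig) {d : ℝ}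
    (hdist : ∀ s ∈ σ, ∀ t ∈ Sig, d ≤ |s - t|) :
    ∃ a ∈ σ, ∃ b ∈ σ, (∀ s ∈ σ, a ≤ s ∧ s ≤ b) ∧ ∀ t ∈ Sig, t ≤ a - d ∨ b + d ≤ t := by
  obtain ⟨a, ha, hmin⟩ := hσ.exists_isLeast hne
  obtain ⟨b, hb, hmax⟩ := hσ.exists_isGreatest hne
  refine ⟨a, ha, b, hb, fun s hs => ⟨hmin hs, hmax hs⟩, fun t ht => ?_⟩
  have hnot : t ∉ Set.Icc a b := fun h => by
    rw [← segment_eq_Icc (hmin hb)] at h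
    exact Set.disjoint_left.1 hconv (segment_subset_convexHull ha hb h) ht
  rcases lt_or_ge t a with h | h
  · have := hdist a ha t ht
    rw [abs_of_pos (by linarith)] at this
    exact Or.inl (by linarith)
  · have h' : b < t := not_le.1 fun h' => hnot ⟨h, h'⟩
    have := hdist b hb t ht
    rw [abs_of_neg (by linarith)] at this
    exact Or.inr (by linarith)

/-- **Theorem (Theorem 2.1 (iii)).** If the convex hull of `σ` does not intersect `Σ` and
`‖V‖ < √2 d` (equivalently `δ_V < d`), then the spectrum of `B = A + V` in the open
`d`-neighborhood of `σ` is separated from the remainder of the spectrum of `B`: it coincides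
with the part of `spec B` in the closed `δ_V`-neighborhood of `σ`, and it is a nonempty
closed set. -/
theorem spectrum_separated_d_neighborhood
    {H : Type*} [NormedAddCommGroup H] [InnerProductSpace ℂ H] [CompleteSpace H]
    [TopologicalSpace.SeparableSpace H]
    (A V B : H →L[ℂ] H) (hA : IsSelfAdjoint A) (hV : IsSelfAdjoint V) (hB : B = A + V)
    (σ Sig : Set ℝ) (hσc : IsClosed σ) (hSigc : IsClosed Sig) (hdisj : Disjoint σ Sig)
    (hspec : spectrum ℝ A = σ ∪ Sig)
    (d : ℝ) (hd : d = sInf (Set.image2 dist σ Sig)) (hd0 : 0 < d)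
    (EA : Set ℝ → H →L[ℂ] H) (hEA : IsSpectralMeasure A EA)
    (hoff₁ : EA σ * V * EA σ = 0) (hoff₂ : EA Sig * V * EA Sig = 0)
    (δ : ℝ) (hδ : δ = ‖V‖ * Real.tan (Real.arctan (2 * ‖V‖ / d) / 2))
    (hconv : Disjoint (convexHull ℝ σ) Sig)
    (hnorm : ‖V‖ < Real.sqrt 2 * d) :
    spectrum ℝ B ∩ Metric.thickening d σ = spectrum ℝ B ∩ Metric.cthickening δ σ ∧
    (spectrum ℝ B ∩ Metric.thickening d σ).Nonempty ∧
    IsClosed (spectrum ℝ B ∩ Metric.thickening d σ) := by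
  subst hB
  have hT : IsSelfAdjoint (A + V) := hA.add hV
  have hcompact : IsCompact σ := (spectrum.isCompact A).of_isClosed_subset hσc (by simp [hspec])
  have himage : (Set.image2 dist σ Sig).Nonempty := by
    rw [Set.nonempty_iff_ne_empty]
    intro h
    rw [h, Real.sInf_empty] at hd
    exact hd0.ne' hd
  have hdist : ∀ s ∈ σ, ∀ t ∈ Sig, d ≤ |s - t| := fun s hs t ht => by
    rw [hd, ← Real.dist_eq]
    exact csInf_le ⟨0, by rintro _ ⟨_, _, _, _, rfl⟩; exact dist_nonneg⟩ ⟨s, hs, t, ht, rfl⟩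
  have hne : σ.Nonempty := himage.of_image2_left
  obtain ⟨a, ha, b, hb, hσab, hSig⟩ :=
    exists_endpoints_of_disjoint_convexHull hcompact hne hconv hdist
  have hab : a ≤ b := (hσab b hb).1
  obtain ⟨hδ0, hδv⟩ := mul_tan_half_arctan_spec (norm_nonneg V) hd0
  rw [← hδ] at hδ0 hδv
  have hδd : δ < d := by
    have h1 : ‖V‖ ^ 2 < 2 * d ^ 2 := by
      have h2 := pow_lt_pow_left₀ hnorm (norm_nonneg V) two_ne_zero
      rwa [mul_pow, Real.sq_sqrt (by norm_num)] at h2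
    nlinarith
  have hsq : ∀ r, δ < r → ‖V‖ ^ 2 < r * (r + d) := fun r hr => by nlinarith
  have hmσ : MeasurableSet σ := hσc.measurableSet
  have hmSig : MeasurableSet Sig := hSigc.measurableSet
  -- the parts of `Sig` below and above `σ`
  set L := Sig ∩ Set.Iic (a - d) with hL
  set U := Sig ∩ Set.Ici (b + d) with hU
  have hmL : MeasurableSet L := hmSig.inter measurableSet_Iic
  have hmU : MeasurableSet U := hmSig.inter measurableSet_Ici
  have hLU : Disjoint L U := Set.disjoint_left.2 fun t h h' => by
    have h1 : t ≤ a - d := h.2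
    have h2 : b + d ≤ t := h'.2
    linarith
  have hσL : Disjoint σ L := hdisj.mono_right Set.inter_subset_left
  have hσU : Disjoint σ U := hdisj.mono_right Set.inter_subset_left
  have hSigLU : Sig = L ∪ U := by
    rw [hL, hU, ← Set.inter_union_distrib_left, eq_comm, Set.inter_eq_left]
    exact hSig
  have hsum : EA σ + EA Sig = 1 := by
    rw [← hEA.map_union hmσ hmSig hdisj, ← hspec, hEA.map_spectrum hA]
  have hsum' : ∀ x, EA σ x + (EA L x + EA U x) = x := fun x => by
    have h := hEA.map_union hmL hmU hLU
    rw [← hSigLU] at h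
    rw [h] at hsum
    exact DFunLike.congr_fun hsum x
  have hVσ : ∀ z, EA σ z = z → inner ℂ (V z) z = 0 := fun z hz =>
    hEA.inner_offDiagonal_eq_zero hmσ hoff₁ hz
  have hVL : ∀ z, EA L z = z → inner ℂ (V z) z = 0 := fun z hz =>
    hEA.inner_offDiagonal_eq_zero hmSig hoff₂
      (hEA.apply_of_subset hmL hmSig Set.inter_subset_left hz)
  have hVU : ∀ z, EA U z = z → inner ℂ (V z) z = 0 := fun z hz =>
    hEA.inner_offDiagonal_eq_zero hmSig hoff₂
      (hEA.apply_of_subset hmU hmSig Set.inter_subset_left hz)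
  have hform : ∀ z, inner ℂ (V z) z = 0 → (A + V).reApplyInnerSelf z = A.reApplyInnerSelf z :=
    fun z hz => by
      simp [ContinuousLinearMap.reApplyInnerSelf_apply, inner_add_left, hz]
  have hbounds : ∀ r, δ < r → ∃ c > 0,
      (∀ x, EA L x = 0 → (a - r + c) * ‖x‖ ^ 2 ≤ (A + V).reApplyInnerSelf x) ∧
      (∀ x, EA U x = 0 → (A + V).reApplyInnerSelf x ≤ (b + r - c) * ‖x‖ ^ 2) := by
    intro r hr
    obtain ⟨c, hc, hcr, hcr', hcv⟩ := exists_pos_sq_le_sub_mul_sub (hδ0.trans_lt hr)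
      (by linarith : 0 < r + d) (hsq r hr)
    refine ⟨c, hc, fun x hx => ?_, fun x hx => ?_⟩
    · refine hEA.le_reApplyInnerSelf_add hA hV hmσ hmU hσU hVσ hVU (p := a) (q := a + d)
        (fun t ht => (hσab t ht).1) (fun t ht => le_trans (by linarith) (Set.mem_Ici.1 ht.2))
        (by linarith) (by linarith) (by convert hcv using 2 <;> ring) ?_
      have h := hsum' x
      rwa [hx, zero_add] at h
    · refine hEA.reApplyInnerSelf_add_le hA hV hmσ hmL hσL hVσ hVL (p := b) (q := b - d)
        (fun t ht => (hσab t ht).2) (fun t ht => (Set.mem_Iic.1 ht.2).trans (by linarith))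
        (by linarith) (by linarith) (by convert hcv using 2 <;> ring) ?_
      have h := hsum' x
      rwa [hx, add_zero] at h
  have hbelow : ∀ r, δ < r → r < d → a - r ∉ spectrum ℝ (A + V) := by
    intro r hr hrd
    obtain ⟨c, hc, hpos, -⟩ := hbounds r hr
    refine notMem_spectrum_of_form_bounds hT (hEA.isSelfAdjoint L hmL)
      (by rw [hEA.map_inter _ _ hmL hmL, Set.inter_self]) (lt_min hc (sub_pos.2 hrd))
      (fun x hx => le_trans ?_ (hpos x hx)) fun x hx => ?_
    · gcongr
      exact min_le_left _ _
    · rw [hform x (hVL x hx)]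
      refine hEA.reApplyInnerSelf_le_mul_sq hmL hx fun t ht => ?_
      linarith [Set.mem_Iic.1 ht.2, min_le_right c (d - r)]
  have habove : ∀ r, δ < r → r < d → b + r ∉ spectrum ℝ (A + V) := by
    intro r hr hrd
    obtain ⟨c, hc, -, hneg⟩ := hbounds r hr
    refine notMem_spectrum_of_form_bounds (E := 1 - EA U) hT
      ((IsSelfAdjoint.one _).sub (hEA.isSelfAdjoint U hmU)) ?_ (lt_min hc (sub_pos.2 hrd))
      (fun x hx => ?_) fun x hx => (hneg x ?_).trans ?_
    · rw [mul_sub, sub_mul, sub_mul, hEA.map_inter _ _ hmU hmU, Set.inter_self]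
      simp
    · have hx' : EA U x = x := (sub_eq_zero.1 hx).symm
      rw [hform x (hVU x hx')]
      refine hEA.mul_sq_le_reApplyInnerSelf hmU hx' fun t ht => ?_
      linarith [Set.mem_Ici.1 ht.2, min_le_right c (d - r)]
    · exact sub_eq_self.1 hx
    · gcongr
      exact min_le_left _ _
  have hinner : ∀ μ, a ≤ μ → μ ≤ b → δ < Metric.infDist μ σ → μ ∉ spectrum ℝ (A + V) := by
    intro μ haμ hμb hr
    have hle : ∀ t ∈ σ, Metric.infDist μ σ ≤ |t - μ| := fun t ht => by
      rw [← Real.dist_eq, dist_comm]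
      exact Metric.infDist_le_dist_of_mem ht
    refine hEA.notMem_spectrum_add hA hV hmσ hmSig hsum hoff₁ hoff₂ (hδ0.trans_lt hr)
      (by linarith) (hsq _ hr) hle fun t ht => ?_
    rcases hSig t ht with h | h
    · have h1 := hle a ha
      rw [abs_of_nonpos (by linarith)] at h1
      rw [abs_of_neg (by linarith)]
      linarith
    · have h1 := hle b hb
      rw [abs_of_nonneg (by linarith)] at h1
      rw [abs_of_pos (by linarith)]
      linarith
  have hsubset : Metric.cthickening δ σ ⊆ Metric.thickening d σ :=
    Metric.cthickening_subset_thickening' hd0 hδd σ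
  have hmem : ∀ μ, μ ∉ Metric.cthickening δ σ → δ < Metric.infDist μ σ := by
    intro μ hμ
    obtain ⟨s, hs, hsμ⟩ := hcompact.exists_infDist_eq_dist hne μ
    exact not_le.1 fun h => hμ (Metric.mem_cthickening_of_dist_le _ s _ _ hs (hsμ ▸ h))
  have heq : spectrum ℝ (A + V) ∩ Metric.thickening d σ =
      spectrum ℝ (A + V) ∩ Metric.cthickening δ σ := by
    refine Set.Subset.antisymm (fun μ hμ => ⟨hμ.1, ?_⟩) (Set.inter_subset_inter_right _ hsubset)
    by_contra hcon
    have hr := hmem μ hcon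
    obtain ⟨s, hs, hsμ⟩ := Metric.mem_thickening_iff.1 hμ.2
    rw [Real.dist_eq, abs_lt] at hsμ
    rcases lt_or_ge μ a with h | h
    · have h1 := hr.trans_le (Metric.infDist_le_dist_of_mem ha)
      rw [Real.dist_eq, abs_of_neg (by linarith)] at h1
      refine hbelow (a - μ) (by linarith) (by linarith [(hσab s hs).1]) ?_
      rw [sub_sub_cancel]
      exact hμ.1
    rcases lt_or_ge b μ with h' | h'
    · have h1 := hr.trans_le (Metric.infDist_le_dist_of_mem hb)
      rw [Real.dist_eq, abs_of_pos (by linarith)] at h1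
      refine habove (μ - b) (by linarith) (by linarith [(hσab s hs).2]) ?_
      rw [add_sub_cancel]
      exact hμ.1
    · exact hinner μ h h' hr hμ.1
  refine ⟨heq, ?_, heq ▸ (spectrum.isClosed _).inter Metric.isClosed_cthickening⟩
  obtain ⟨r, hr, hrd⟩ := exists_between hδd
  obtain ⟨c, hc, hpos, hneg⟩ := hbounds r hr
  obtain ⟨z, hz⟩ : ∃ z, EA σ z ≠ 0 := by
    by_contra! hzero
    refine notMem_spectrum_of_le_norm hA hd0 (fun x => ?_) (hspec ▸ Or.inl ha : a ∈ spectrum ℝ A)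
    have hx : EA Sig x = x := by
      have h : EA σ x + EA Sig x = x := DFunLike.congr_fun hsum x
      rwa [hzero, zero_add] at h
    refine hEA.mul_norm_le hmSig hx fun t ht => ?_
    rw [abs_sub_comm]
    exact hdist a ha t ht
  obtain ⟨μ, hμ, hμ₁, hμ₂⟩ := exists_mem_spectrum_of_form_bounds hT (hEA.isSelfAdjoint U hmU)
    (hEA.map_mul_of_disjoint hmL hmU hLU) (by linarith : a - r < b + r) hc hpos hneg hz
    (DFunLike.congr_fun (hEA.map_mul_of_disjoint hmL hmσ hσL.symm) z)
    (DFunLike.congr_fun (hEA.map_mul_of_disjoint hmU hmσ hσU.symm) z)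
  refine ⟨μ, hμ, ?_⟩
  rcases lt_or_ge μ a with h | h
  · refine Metric.mem_thickening_iff.2 ⟨a, ha, ?_⟩
    rw [Real.dist_eq, abs_of_neg (by linarith)]
    linarith
  rcases lt_or_ge b μ with h' | h'
  · refine Metric.mem_thickening_iff.2 ⟨b, hb, ?_⟩
    rw [Real.dist_eq, abs_of_pos (by linarith)]
    linarith
  · by_contra hcon
    exact hinner μ h h' (hmem μ fun hc => hcon (hsubset hc)) hμ
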